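/- Let q = 2^e with e ≥ 2 (so q > 2 is a power of 2), let k ≥ 1 be an integer with (q,k) ≠ (4,1), and suppose the direct power L₂(q)^k of the projective special linear group L₂(q) = PSL(2, F_q) over the field F_q with q elements is generated by two elements. Then L₂(q)^k is a purely strongly real Beauville group: it admits a Beauville structure, and every Beauville structure of L₂(q)^k is strongly real. -/

import Mathlib

/-- `beauvilleSigma x y` is Σ(x,y): the set of all conjugates of all powers of
`x`, `y` and `x*y` in the group `G`. -/
def beauvilleSigma {G : Type*} [Group G] (x y : G) : Set G :=
  {a | ∃ (i : ℕ) (g : G),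
      a = g * x ^ i * g⁻¹ ∨ a = g * y ^ i * g⁻¹ ∨ a = g * (x * y) ^ i * g⁻¹}

/-- `{(x₁,y₁),(x₂,y₂)}` is a Beauville structure for `G`:
both pairs generate `G` and `Σ(x₁,y₁) ∩ Σ(x₂,y₂) = {1}`. -/
def IsBeauvilleStructure {G : Type*} [Group G] (x₁ y₁ x₂ y₂ : G) : Prop :=
  Subgroup.closure {x₁, y₁} = ⊤ ∧ Subgroup.closure {x₂, y₂} = ⊤ ∧
    beauvilleSigma x₁ y₁ ∩ beauvilleSigma x₂ y₂ = {1}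

/-- A Beauville structure `{(x₁,y₁),(x₂,y₂)}` is strongly real if there are an
automorphism `φ` of `G` and elements `g₁ g₂ : G` with
`gᵢ * φ xᵢ * gᵢ⁻¹ = xᵢ⁻¹` and `gᵢ * φ yᵢ * gᵢ⁻¹ = yᵢ⁻¹` for `i = 1, 2`. -/
def IsStronglyRealStructure {G : Type*} [Group G] (x₁ y₁ x₂ y₂ : G) : Prop :=
  ∃ (φ : G ≃* G) (g₁ g₂ : G),
    g₁ * φ x₁ * g₁⁻¹ = x₁⁻¹ ∧ g₁ * φ y₁ * g₁⁻¹ = y₁⁻¹ ∧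
    g₂ * φ x₂ * g₂⁻¹ = x₂⁻¹ ∧ g₂ * φ y₂ * g₂⁻¹ = y₂⁻¹

open scoped MatrixGroups

/-!
For `q > 2` even, `PSL(2, q) = SL(2, q)`, and every `g ∈ SL(2, q)` satisfies `g ^ m = 1` for some
`m` among the pairwise coprime numbers `2`, `q - 1`, `q + 1`.

Strong reality: if `x` and `y` generate, then `C = xy - yx` is an invertible matrix with
`C x = x⁻¹ C` and `C y = y⁻¹ C`; since every element of the field is a square, `C` can be rescaled
to determinant one.  So every generating pair is inverted by an inner automorphism, also in
powers of the group.

Existence: for a simple group `S`, a pair generates `S ^ k` as soon as its coordinates are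
generating pairs of `S` lying in distinct orbits of `Aut S` (P. Hall).  Hence pairs of prescribed
orders on a few coordinates extend to generating pairs of `S ^ k`, the hypothesis providing enough
orbits.  The orders on (at most) four coordinates are arranged so that an element of prime order
common to the two sets `Σ` would have two different supports.  For `k = 1` one uses instead a pair
of exponent dividing `2 (q + 1)` and a pair of exponent `q - 1`.
-/

namespace Beauville

open Function Subgroup

section GeneratingPairs

variable {G H S ι : Type*} [Group G] [Group H] [Group S]

lemma closure_pair_map_eq_top {f : G →* H} (hf : Surjective f) {x y : G}
    (hxy : closure {x, y} = ⊤) : closure {f x, f y} = ⊤ := by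
  rw [← Set.image_pair, ← MonoidHom.map_closure, hxy, map_top_of_surjective f hf]

lemma closure_pair_apply_eq_top {x y : ι → S} (hxy : closure {x, y} = ⊤) (i : ι) :
    closure {x i, y i} = ⊤ :=
  closure_pair_map_eq_top (f := Pi.evalMonoidHom (fun _ => S) i) (surjective_eval i) hxy

/-- The class of the pair `(x, y)` modulo the diagonal action of the automorphism group. -/
def pairClass (x y : S) : MulAction.orbitRel.Quotient (MulAut S) (S × S) :=
  Quotient.mk _ (x, y)

lemma pairClass_eq_pairClass_iff {x y x' y' : S} :
    pairClass x y = pairClass x' y' ↔ ∃ φ : MulAut S, φ x' = x ∧ φ y' = y := by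
  simp only [pairClass, Quotient.eq, MulAction.orbitRel_apply, MulAction.mem_orbit_iff,
    Prod.smul_mk, MulAut.smul_def, Prod.mk.injEq]

lemma injective_pairClass_of_closure_pair_eq_top [Nontrivial S] {x y : ι → S}
    (hxy : closure {x, y} = ⊤) : Injective fun i => pairClass (x i) (y i) := by
  classical
  intro i j hij
  by_contra hne
  obtain ⟨φ, hx, hy⟩ := pairClass_eq_pairClass_iff.mp hij
  obtain ⟨s, hs⟩ := exists_ne (1 : S)
  have heq : φ.toMonoidHom.comp (Pi.evalMonoidHom (fun _ => S) j) = Pi.evalMonoidHom _ i :=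
    MonoidHom.eq_of_eqOn_dense hxy (by rintro _ (rfl | rfl) <;> assumption)
  refine hs ?_
  simpa [Pi.mulSingle_eq_of_ne (Ne.symm hne)] using
    (DFunLike.congr_fun heq (Pi.mulSingle i s)).symm

lemma exists_mulAut_apply_eq [Finite S] {f g : G →* S} (hf : Surjective f) (hg : Surjective g)
    (hker : f.ker ≤ g.ker) : ∃ φ : MulAut S, ∀ x, φ (f x) = g x := by
  let φ : S →* S := f.liftOfSurjective hf ⟨g, hker⟩
  have hφ (x : G) : φ (f x) = g x := f.liftOfRightInverse_comp_apply _ _ ⟨g, hker⟩ x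
  have hsurj : Surjective φ := fun s => by
    obtain ⟨x, rfl⟩ := hg s
    exact ⟨f x, hφ x⟩
  exact ⟨MulEquiv.ofBijective φ ⟨Finite.injective_iff_surjective.mpr hsurj, hsurj⟩, hφ⟩

end GeneratingPairs

section SubgroupsOfPowers

variable {S ι : Type*} [Group S] {H : Subgroup (ι → S)}

/-- The `i`-th coordinates of the elements of `H` whose coordinates in `I` are all trivial. -/
def coordProj (H : Subgroup (ι → S)) (i : ι) (I : Set ι) : Subgroup S :=
  (H ⊓ Subgroup.pi I fun _ => ⊥).map (Pi.evalMonoidHom _ i)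

lemma mem_coordProj {i : ι} {I : Set ι} {s : S} :
    s ∈ coordProj H i I ↔ ∃ h ∈ H, (∀ j ∈ I, h j = 1) ∧ h i = s := by
  simp [coordProj, Subgroup.mem_pi, and_assoc]

lemma normal_coordProj {i : ι} (hi : coordProj H i ∅ = ⊤) (I : Set ι) :
    (coordProj H i I).Normal where
  conj_mem s hs t := by
    obtain ⟨h, hh, hI, rfl⟩ := mem_coordProj.mp hs
    obtain ⟨g, hg, -, rfl⟩ := mem_coordProj.mp (hi ▸ mem_top t)
    exact mem_coordProj.mpr ⟨g * h * g⁻¹, mul_mem (mul_mem hg hh) (inv_mem hg),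
      fun j hj => by simp [hI j hj], rfl⟩

lemma commutator_coordProj_le (i : ι) (I J : Set ι) :
    ⁅coordProj H i I, coordProj H i J⁆ ≤ coordProj H i (I ∪ J) := by
  refine commutator_le.mpr fun s hs t ht => ?_
  obtain ⟨g, hg, hI, rfl⟩ := mem_coordProj.mp hs
  obtain ⟨h, hh, hJ, rfl⟩ := mem_coordProj.mp ht
  refine mem_coordProj.mpr ⟨g * h * g⁻¹ * h⁻¹, ?_, ?_, rfl⟩
  · exact mul_mem (mul_mem (mul_mem hg hh) (inv_mem hg)) (inv_mem hh)
  · rintro j (hj | hj)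
    · simp [hI j hj]
    · simp [hJ j hj]

lemma coordProj_eq_top_of_singleton [Group.IsPerfect S] {i : ι} (hi : coordProj H i ∅ = ⊤)
    (hpair : ∀ j ≠ i, coordProj H i {j} = ⊤) {I : Set ι} (hI : I.Finite) (hiI : i ∉ I) :
    coordProj H i I = ⊤ := by
  induction I, hI using Set.Finite.induction_on with
  | empty => exact hi
  | @insert j I _ _ ih =>
    rw [Set.mem_insert_iff, not_or] at hiI
    refine top_le_iff.mp ?_
    calc ⊤ = ⁅coordProj H i {j}, coordProj H i I⁆ := by
          rw [hpair j (Ne.symm hiI.1), ih hiI.2, ← commutator_def,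
            Group.IsPerfect.commutator_eq_top]
      _ ≤ coordProj H i (insert j I) := commutator_coordProj_le i {j} I

lemma eq_top_of_coordProj_eq_top [Finite ι] (hH : ∀ i, coordProj H i {i}ᶜ = ⊤) : H = ⊤ := by
  classical
  refine eq_top_iff.mpr fun f _ => pi_mem_of_mulSingle_mem f fun i => ?_
  obtain ⟨h, hh, hne, hi⟩ := mem_coordProj.mp (hH i ▸ mem_top (f i))
  convert hh using 1
  funext j
  rcases eq_or_ne j i with rfl | hj
  · rw [Pi.mulSingle_eq_same, hi]
  · rw [Pi.mulSingle_eq_of_ne hj, hne j hj]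

lemma coordProj_singleton_eq_top_or [Finite S] [IsSimpleGroup S] {i j : ι}
    (hi : coordProj H i ∅ = ⊤) (hj : coordProj H j ∅ = ⊤) :
    coordProj H i {j} = ⊤ ∨ ∃ φ : MulAut S, ∀ h ∈ H, φ (h j) = h i := by
  refine (normal_coordProj hi {j}).eq_bot_or_eq_top.symm.imp_right fun hbot => ?_
  have hsurj {l : ι} (hl : coordProj H l ∅ = ⊤) :
      Surjective ((Pi.evalMonoidHom (fun _ => S) l).comp H.subtype) := fun s => by
    obtain ⟨h, hh, -, hs⟩ := mem_coordProj.mp (hl ▸ mem_top s)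
    exact ⟨⟨h, hh⟩, hs⟩
  obtain ⟨φ, hφ⟩ := exists_mulAut_apply_eq (hsurj hj) (hsurj hi) fun h hker => by
    have : (h : ι → S) i ∈ coordProj H i {j} :=
      mem_coordProj.mpr ⟨h, h.2, by simpa using hker, rfl⟩
    simpa [hbot] using this
  exact ⟨φ, fun h hh => hφ ⟨h, hh⟩⟩

end SubgroupsOfPowers

section Hall

variable {S ι : Type*} [Group S] [Finite S] [IsSimpleGroup S] [Group.IsPerfect S] [Finite ι]

/-- P. Hall's criterion. -/
theorem closure_pair_eq_top_of_injective_pairClass {x y : ι → S}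
    (hgen : ∀ i, closure {x i, y i} = ⊤) (hinj : Injective fun i => pairClass (x i) (y i)) :
    closure {x, y} = ⊤ := by
  set H := closure {x, y}
  have hx : x ∈ H := subset_closure (by simp)
  have hy : y ∈ H := subset_closure (by simp)
  have hproj (i : ι) : coordProj H i ∅ = ⊤ := by
    refine top_le_iff.mp (hgen i ▸ (closure_le _).mpr ?_)
    rintro _ (rfl | rfl)
    · exact mem_coordProj.mpr ⟨x, hx, by simp, rfl⟩
    · exact mem_coordProj.mpr ⟨y, hy, by simp, rfl⟩
  have hpair (i j : ι) (hji : j ≠ i) : coordProj H i {j} = ⊤ := by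
    refine (coordProj_singleton_eq_top_or (hproj i) (hproj j)).resolve_right ?_
    rintro ⟨φ, hφ⟩
    exact hji (hinj (pairClass_eq_pairClass_iff.mpr ⟨φ, hφ x hx, hφ y hy⟩)).symm
  exact eq_top_of_coordProj_eq_top fun i =>
    coordProj_eq_top_of_singleton (hproj i) (hpair i) (Set.toFinite _) (by simp)

theorem exists_closure_pair_eq_top_extending {n : ℕ} (ν : Fin n ↪ ι) {u v : Fin n → S}
    (huv : ∀ m, closure {u m, v m} = ⊤) (hinj : Injective fun m => pairClass (u m) (v m))
    (h2gen : ∃ a b : ι → S, closure {a, b} = ⊤) :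
    ∃ x y : ι → S, closure {x, y} = ⊤ ∧ ∀ m, x (ν m) = u m ∧ y (ν m) = v m := by
  obtain ⟨a, b, hab⟩ := h2gen
  let Q := {c : MulAction.orbitRel.Quotient (MulAut S) (S × S) //
    ∃ x y : S, closure {x, y} = ⊤ ∧ pairClass x y = c}
  let A : ι ↪ Q := ⟨fun i => ⟨pairClass (a i) (b i), _, _, closure_pair_apply_eq_top hab i, rfl⟩,
    fun i j hij => injective_pairClass_of_closure_pair_eq_top hab (congrArg Subtype.val hij)⟩
  let U : Fin n ↪ Q := ⟨fun m => ⟨pairClass (u m) (v m), _, _, huv m, rfl⟩,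
    fun l m hlm => hinj (congrArg Subtype.val hlm)⟩
  obtain ⟨σ, hσ⟩ := (Equiv.Perm.isMultiplyPretransitive Q n).exists_smul_eq (ν.trans A) U
  have hrep (i : ι) : ∃ x y : S, closure {x, y} = ⊤ ∧ pairClass x y = (σ (A i)).1 ∧
      ∀ m, ν m = i → x = u m ∧ y = v m := by
    by_cases hi : ∃ m, ν m = i
    · obtain ⟨m, rfl⟩ := hi
      refine ⟨u m, v m, huv m, ?_, fun l hl => by rw [ν.injective hl]; exact ⟨rfl, rfl⟩⟩
      exact congrArg Subtype.val (DFunLike.congr_fun hσ m).symm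
    · obtain ⟨x, y, hxy, hc⟩ := (σ (A i)).2
      exact ⟨x, y, hxy, hc, fun m hm => absurd ⟨m, hm⟩ hi⟩
  choose x y hxy hclass hν using hrep
  refine ⟨x, y, closure_pair_eq_top_of_injective_pairClass hxy fun i j hij => ?_,
    fun m => hν _ m rfl⟩
  simp only [hclass] at hij
  exact A.injective (σ.injective (Subtype.ext hij))

end Hall

section Sigma

variable {G H : Type*} [Group G] [Group H]

/-- The triple `(x, y, xy)` attached to a pair of group elements. -/
def triple (x y : G) : Fin 3 → G := ![x, y, x * y]

lemma mem_beauvilleSigma_iff {x y a : G} :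
    a ∈ beauvilleSigma x y ↔ ∃ (c : Fin 3) (n : ℕ) (g : G), a = g * triple x y c ^ n * g⁻¹ := by
  simp only [beauvilleSigma, Set.mem_ofPred_eq, exists_or, Fin.exists_fin_succ, triple,
    IsEmpty.exists_iff, or_false]
  rfl

lemma one_mem_beauvilleSigma (x y : G) : 1 ∈ beauvilleSigma x y :=
  ⟨0, 1, by simp⟩

lemma pow_mem_beauvilleSigma {x y a : G} (ha : a ∈ beauvilleSigma x y) (m : ℕ) :
    a ^ m ∈ beauvilleSigma x y := by
  obtain ⟨c, n, g, rfl⟩ := mem_beauvilleSigma_iff.mp ha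
  exact mem_beauvilleSigma_iff.mpr ⟨c, n * m, g, by rw [conj_pow, pow_mul]⟩

lemma pow_eq_one_of_mem_beauvilleSigma {x y a : G} {n : ℕ} (ha : a ∈ beauvilleSigma x y)
    (hn : ∀ c, triple x y c ^ n = 1) : a ^ n = 1 := by
  obtain ⟨c, m, g, rfl⟩ := mem_beauvilleSigma_iff.mp ha
  rw [conj_pow, pow_right_comm, hn, one_pow, mul_one, mul_inv_cancel]

lemma beauvilleSigma_map (f : G ≃* H) (x y : G) :
    beauvilleSigma (f x) (f y) = f '' beauvilleSigma x y := by
  have htriple (c : Fin 3) : triple (f x) (f y) c = f (triple x y c) := by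
    fin_cases c
    exacts [rfl, rfl, (map_mul f x y).symm]
  ext a
  simp only [Set.mem_image, mem_beauvilleSigma_iff, htriple]
  constructor
  · rintro ⟨c, n, g, rfl⟩
    exact ⟨_, ⟨c, n, f.symm g, rfl⟩, by simp⟩
  · rintro ⟨_, ⟨c, n, g, rfl⟩, rfl⟩
    exact ⟨c, n, f g, by simp⟩

lemma _root_.IsBeauvilleStructure.map (f : G ≃* H) {x₁ y₁ x₂ y₂ : G}
    (h : IsBeauvilleStructure x₁ y₁ x₂ y₂) :
    IsBeauvilleStructure (f x₁) (f y₁) (f x₂) (f y₂) :=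
  ⟨closure_pair_map_eq_top (f := f.toMonoidHom) f.surjective h.1,
    closure_pair_map_eq_top (f := f.toMonoidHom) f.surjective h.2.1, by
    rw [beauvilleSigma_map, beauvilleSigma_map, ← Set.image_inter f.injective, h.2.2,
      Set.image_singleton, map_one]⟩

lemma beauvilleSigma_inter_eq_one {x₁ y₁ x₂ y₂ : G}
    (h : ∀ z ∈ beauvilleSigma x₁ y₁, z ∈ beauvilleSigma x₂ y₂ → z = 1) :
    beauvilleSigma x₁ y₁ ∩ beauvilleSigma x₂ y₂ = {1} :=
  Set.Subset.antisymm (fun z hz => h z hz.1 hz.2) <|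
    Set.singleton_subset_iff.mpr ⟨one_mem_beauvilleSigma _ _, one_mem_beauvilleSigma _ _⟩

lemma isBeauvilleStructure_of_coprime {x₁ y₁ x₂ y₂ : G} {m n : ℕ} (hmn : m.Coprime n)
    (h₁ : closure {x₁, y₁} = ⊤) (h₂ : closure {x₂, y₂} = ⊤)
    (hm : ∀ c, triple x₁ y₁ c ^ m = 1) (hn : ∀ c, triple x₂ y₂ c ^ n = 1) :
    IsBeauvilleStructure x₁ y₁ x₂ y₂ := by
  refine ⟨h₁, h₂, beauvilleSigma_inter_eq_one fun z hz₁ hz₂ => ?_⟩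
  rw [← pow_one z, ← hmn.gcd_eq_one]
  exact pow_gcd_eq_one.mpr
    ⟨pow_eq_one_of_mem_beauvilleSigma hz₁ hm, pow_eq_one_of_mem_beauvilleSigma hz₂ hn⟩

lemma beauvilleSigma_inter_eq_one_of_prime [Finite G] {x₁ y₁ x₂ y₂ : G}
    (h : ∀ z ∈ beauvilleSigma x₁ y₁, z ∈ beauvilleSigma x₂ y₂ → ¬(orderOf z).Prime) :
    beauvilleSigma x₁ y₁ ∩ beauvilleSigma x₂ y₂ = {1} := by
  refine beauvilleSigma_inter_eq_one fun z hz₁ hz₂ => ?_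
  by_contra hz
  obtain ⟨p, hp, hpz⟩ := Nat.exists_prime_and_dvd (mt orderOf_eq_one_iff.mp hz)
  refine h _ (pow_mem_beauvilleSigma hz₁ (orderOf z / p))
    (pow_mem_beauvilleSigma hz₂ (orderOf z / p)) ?_
  rwa [orderOf_pow_orderOf_div (orderOf_pos z).ne' hpz]

end Sigma

section Types

variable {S ι : Type*} [Group S]

/-- `S` is generated by elements `x` and `y` such that `x`, `y`, `xy` have orders `l`, `m`, `n`;
one says that such a pair has type `(l, m, n)`. -/
def HasType (S : Type*) [Group S] (l m n : ℕ) : Prop :=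
  ∃ x y : S, closure {x, y} = ⊤ ∧ orderOf x = l ∧ orderOf y = m ∧ orderOf (x * y) = n

lemma HasType.swap_left {l m n : ℕ} : HasType S l m n → HasType S m l n := by
  rintro ⟨x, y, hxy, hx, hy, hn⟩
  refine ⟨y, x, Set.pair_comm x y ▸ hxy, hy, hx, ?_⟩
  have hconj : SemiconjBy x (y * x) (x * y) := (mul_assoc x y x).symm
  exact hconj.orderOf_eq.trans hn

lemma HasType.swap_right {l m n : ℕ} : HasType S l m n → HasType S l n m := by
  rintro ⟨x, y, hxy, hx, hy, hn⟩
  refine ⟨x⁻¹, x * y, ?_, by rwa [orderOf_inv], hn, by rwa [inv_mul_cancel_left]⟩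
  have hx' : x⁻¹ ∈ closure {x⁻¹, x * y} := subset_closure (by simp)
  have hxy' : x * y ∈ closure {x⁻¹, x * y} := subset_closure (by simp)
  refine top_le_iff.mp (hxy ▸ (closure_le _).mpr ?_)
  rintro _ (rfl | rfl)
  · exact inv_mem_iff.mp hx'
  · simpa using mul_mem hx' hxy'

lemma exists_closure_pair_eq_top_of_hasType [Finite S] [IsSimpleGroup S] [Group.IsPerfect S]
    [Finite ι] {n : ℕ} (ν : Fin n ↪ ι) {o : Fin 3 → ℕ} (ho : Injective o)
    {T : Fin n → Fin 3 → Fin 3} (hT : Injective T)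
    (htype : ∀ m, HasType S (o (T m 0)) (o (T m 1)) (o (T m 2)))
    (h2gen : ∃ a b : ι → S, closure {a, b} = ⊤) :
    ∃ x y : ι → S, closure {x, y} = ⊤ ∧ ∀ m c, orderOf (triple x y c (ν m)) = o (T m c) := by
  choose u v huv hu hv hmul using htype
  have hinj : Injective fun m => pairClass (u m) (v m) := fun l m hlm => hT <| funext fun c => by
    obtain ⟨φ, h₁, h₂⟩ := pairClass_eq_pairClass_iff.mp hlm
    refine ho ?_
    fin_cases c
    · change o (T l 0) = o (T m 0)
      rw [← hu l, ← hu m, ← h₁, MulEquiv.orderOf_eq]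
    · change o (T l 1) = o (T m 1)
      rw [← hv l, ← hv m, ← h₂, MulEquiv.orderOf_eq]
    · change o (T l 2) = o (T m 2)
      rw [← hmul l, ← hmul m, ← h₁, ← h₂, ← map_mul, MulEquiv.orderOf_eq]
  obtain ⟨x, y, hxy, hν⟩ := exists_closure_pair_eq_top_extending ν huv hinj h2gen
  refine ⟨x, y, hxy, fun m c => ?_⟩
  obtain ⟨hx, hy⟩ := hν m
  fin_cases c
  · exact (congrArg orderOf hx).trans (hu m)
  · exact (congrArg orderOf hy).trans (hv m)
  · exact (congrArg orderOf (congrArg₂ (· * ·) hx hy)).trans (hmul m)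

end Types

section Supports

variable {S ι κ : Type*} [Group S] {o : κ → ℕ}

lemma eq_of_prime_dvd (ho : Pairwise (Nat.Coprime on o)) {p : ℕ} (hp : p.Prime) {c d : κ}
    (hc : p ∣ o c) (hd : p ∣ o d) : c = d := by
  by_contra hcd
  exact hp.ne_one (Nat.eq_one_of_dvd_coprimes (ho hcd) hc hd)

lemma orderOf_apply_eq_of_ne_one {z : ι → S} (hz : (orderOf z).Prime) {j : ι} (hj : z j ≠ 1) :
    orderOf (z j) = orderOf z :=
  have := Fact.mk hz
  orderOf_eq_prime (congrFun (pow_orderOf_eq_one z) j) hj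

lemma exists_orderOf_dvd (hord : ∀ g : S, ∃ c, g ^ o c = 1) {z : ι → S}
    (hz : (orderOf z).Prime) : ∃ c, orderOf z ∣ o c := by
  obtain ⟨j, hj⟩ := ne_iff.mp (mt orderOf_eq_one_iff.mpr hz.ne_one)
  obtain ⟨c, hc⟩ := hord (z j)
  exact ⟨c, orderOf_apply_eq_of_ne_one hz hj ▸ orderOf_dvd_of_pow_eq_one hc⟩

/-- The support of an element of prime order in `Σ` is read off the types of the coordinates. -/
lemma conj_pow_apply_ne_one_iff (ho : Pairwise (Nat.Coprime on o))
    (hord : ∀ g : S, ∃ c, g ^ o c = 1) {z X g : ι → S} {n : ℕ} (hz : (orderOf z).Prime)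
    (hzX : z = g * X ^ n * g⁻¹) {c d : κ} (hc : orderOf z ∣ o c) {j : ι}
    (hj : orderOf (X j) = o d) : z j ≠ 1 ↔ d = c := by
  have hz_pow (l : ι) (m : ℕ) : z l ^ m = 1 ↔ X l ^ (n * m) = 1 := by
    simp [hzX, conj_pow, conj_eq_one_iff, pow_mul]
  have hz_apply (l : ι) : z l = 1 ↔ X l ^ n = 1 := by simpa using hz_pow l 1
  constructor
  · intro hne
    refine eq_of_prime_dvd ho hz ?_ hc
    rw [← orderOf_apply_eq_of_ne_one hz hne, ← hj, orderOf_dvd_iff_pow_eq_one, hz_pow, pow_mul',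
      pow_orderOf_eq_one, one_pow]
  · rintro rfl hzj
    obtain ⟨l, hl⟩ := ne_iff.mp (mt orderOf_eq_one_iff.mpr hz.ne_one)
    obtain ⟨b, hb⟩ := hord (X l)
    have hbd : b = d := by
      refine eq_of_prime_dvd ho hz ?_ hc
      rw [← orderOf_apply_eq_of_ne_one hz hl, orderOf_dvd_iff_pow_eq_one, hz_pow, pow_mul', hb,
        one_pow]
    refine hl ((hz_apply l).mpr (orderOf_dvd_iff_pow_eq_one.mp ?_))
    refine (orderOf_dvd_of_pow_eq_one hb).trans ?_
    rw [hbd, ← hj, orderOf_dvd_iff_pow_eq_one]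
    exact (hz_apply j).mp hzj

end Supports

section Powers

/-- The types of the first four coordinates of the first pair, as indices into a triple of
orders; the rows are chosen so that `patterns_separated` holds. -/
def firstPattern : Fin 4 → Fin 3 → Fin 3 :=
  ![![1, 0, 1], ![2, 1, 2], ![1, 1, 2], ![1, 2, 1]]

/-- The types of the first four coordinates of the second pair, cf. `firstPattern`. -/
def secondPattern : Fin 4 → Fin 3 → Fin 3 :=
  ![![1, 1, 2], ![1, 1, 0], ![2, 0, 1], ![0, 1, 1]]

lemma patterns_separated {n : ℕ} (h2 : 2 ≤ n) (h4 : n ≤ 4) {k l c : Fin 3}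
    (h : ∀ m : Fin n, firstPattern (m.castLE h4) k = c ↔ secondPattern (m.castLE h4) l = c) :
    n < 4 ∧ ∀ m : Fin n, firstPattern (m.castLE h4) k ≠ c := by
  revert k l c
  interval_cases n <;> decide +revert

lemma exists_fin_embedding (ι : Type*) [Finite ι] (N : ℕ) :
    ∃ ν : Fin (min N (Nat.card ι)) ↪ ι, min N (Nat.card ι) < N → Surjective ν := by
  have := Fintype.ofFinite ι
  obtain ⟨ν⟩ : Nonempty (Fin (min N (Nat.card ι)) ↪ ι) :=
    Embedding.nonempty_of_card_le (by simp)
  refine ⟨ν, fun h => (ν.injective.bijective_of_nat_card_le ?_).surjective⟩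
  rw [Nat.card_fin]
  omega

variable {S ι : Type*} [Group S] {o : Fin 3 → ℕ}

lemma hasType_firstPattern (h011 : HasType S (o 0) (o 1) (o 1))
    (h112 : HasType S (o 1) (o 1) (o 2)) (h122 : HasType S (o 1) (o 2) (o 2)) (i : Fin 4) :
    HasType S (o (firstPattern i 0)) (o (firstPattern i 1)) (o (firstPattern i 2)) := by
  fin_cases i
  exacts [h011.swap_left, h122.swap_left, h112, h112.swap_right]

lemma hasType_secondPattern (h011 : HasType S (o 0) (o 1) (o 1))
    (h112 : HasType S (o 1) (o 1) (o 2)) (h012 : HasType S (o 0) (o 1) (o 2)) (i : Fin 4) :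
    HasType S (o (secondPattern i 0)) (o (secondPattern i 1)) (o (secondPattern i 2)) := by
  fin_cases i
  exacts [h112, h011.swap_left.swap_right, h012.swap_right.swap_left, h011]

theorem exists_isBeauvilleStructure_pi [Finite S] [IsSimpleGroup S] [Group.IsPerfect S] [Finite ι]
    (hι : 2 ≤ Nat.card ι) (ho : Pairwise (Nat.Coprime on o)) (ho1 : ∀ c, o c ≠ 1)
    (hord : ∀ g : S, ∃ c, g ^ o c = 1)
    (h011 : HasType S (o 0) (o 1) (o 1)) (h112 : HasType S (o 1) (o 1) (o 2))
    (h122 : HasType S (o 1) (o 2) (o 2)) (h012 : HasType S (o 0) (o 1) (o 2))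
    (h2gen : ∃ a b : ι → S, closure {a, b} = ⊤) :
    ∃ x₁ y₁ x₂ y₂ : ι → S, IsBeauvilleStructure x₁ y₁ x₂ y₂ := by
  obtain ⟨ν, hν⟩ := exists_fin_embedding ι 4
  have hn4 : min 4 (Nat.card ι) ≤ 4 := min_le_left _ _
  have hinj : Injective o := fun c d hcd => by
    by_contra hne
    exact ho1 d ((Nat.coprime_self _).mp (by simpa [Function.onFun, hcd] using ho hne))
  obtain ⟨x₁, y₁, hgen₁, horder₁⟩ := exists_closure_pair_eq_top_of_hasType ν hinj
    (T := firstPattern ∘ Fin.castLE hn4)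
    ((show Injective firstPattern by decide).comp (Fin.castLE_injective hn4))
    (fun _ => hasType_firstPattern h011 h112 h122 _) h2gen
  obtain ⟨x₂, y₂, hgen₂, horder₂⟩ := exists_closure_pair_eq_top_of_hasType ν hinj
    (T := secondPattern ∘ Fin.castLE hn4)
    ((show Injective secondPattern by decide).comp (Fin.castLE_injective hn4))
    (fun _ => hasType_secondPattern h011 h112 h012 _) h2gen
  refine ⟨x₁, y₁, x₂, y₂, hgen₁, hgen₂,
    beauvilleSigma_inter_eq_one_of_prime fun z hz₁ hz₂ hz => ?_⟩
  obtain ⟨k, m, g, hk⟩ := mem_beauvilleSigma_iff.mp hz₁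
  obtain ⟨l, m', g', hl⟩ := mem_beauvilleSigma_iff.mp hz₂
  obtain ⟨c, hc⟩ := exists_orderOf_dvd hord hz
  have hsupp₁ (i) := conj_pow_apply_ne_one_iff ho hord hz hk hc (horder₁ i k)
  have hsupp₂ (i) := conj_pow_apply_ne_one_iff ho hord hz hl hc (horder₂ i l)
  obtain ⟨hlt, hne⟩ := patterns_separated (by omega) hn4 fun i => (hsupp₁ i).symm.trans (hsupp₂ i)
  refine hz.ne_one (orderOf_eq_one_iff.mpr (funext fun j => ?_))
  obtain ⟨i, rfl⟩ := hν hlt j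
  exact not_not.mp (mt (hsupp₁ i).mp (hne i))

end Powers

open Matrix

section ConjugacyInSL2

variable {F K : Type*} [Field F] [Field K]

lemma sl_two_ext {g h : SL(2, F)} (h₀₀ : g 0 0 = h 0 0) (h₀₁ : g 0 1 = h 0 1)
    (h₁₀ : g 1 0 = h 1 0) (h₁₁ : g 1 1 = h 1 1) : g = h := by
  ext i j
  fin_cases i <;> fin_cases j <;> assumption

lemma det_sl_two (g : SL(2, F)) : g 0 0 * g 1 1 - g 0 1 * g 1 0 = 1 := by
  rw [← det_fin_two, g.det_coe]

lemma mul_apply_sl_two (g h : SL(2, F)) (i j : Fin 2) :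
    (g * h) i j = g i 0 * h 0 j + g i 1 * h 1 j := by
  rw [Matrix.SpecialLinearGroup.coe_mul, Matrix.mul_apply, Fin.sum_univ_two]

/-- The element of `SL(2, F)` with rows `(a, b)` and `(c, d)`. -/
def slOf (a b c d : F) (hdet : a * d - b * c = 1) : SL(2, F) :=
  ⟨!![a, b; c, d], by rw [det_fin_two_of, hdet]⟩

@[simp] lemma slOf_coe (a b c d : F) (hdet) : (slOf a b c d hdet).1 = !![a, b; c, d] := rfl

/-- The diagonal torus of `SL(2, F)`. -/
def torus : Fˣ →* SL(2, F) where
  toFun s := slOf s 0 0 (s : F)⁻¹ (by simp)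
  map_one' := by apply sl_two_ext <;> simp
  map_mul' s t := by apply sl_two_ext <;> simp [mul_apply_sl_two, mul_comm]

@[simp] lemma torus_coe (s : Fˣ) : (torus s).1 = !![(s : F), 0; 0, (s : F)⁻¹] := rfl

lemma torus_injective : Injective (torus : Fˣ → SL(2, F)) := fun _ _ hst =>
  Units.ext (congrArg (fun g : SL(2, F) => g 0 0) hst)

lemma trace_torus (s : Fˣ) : (torus s).1.trace = s + (s : F)⁻¹ := by
  simp [trace_fin_two]

lemma exists_cyclic_vector {s : F} {g : SL(2, F)} (hs0 : s ≠ 0) (hs : s ≠ s⁻¹)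
    (htr : g.1.trace = s + s⁻¹) :
    ∃ v w : F, v * (g 1 0 * v + g 1 1 * w) - w * (g 0 0 * v + g 0 1 * w) ≠ 0 := by
  have hdet := det_sl_two g
  rw [trace_fin_two] at htr
  by_contra! hcyc
  have h₁₀ : g 1 0 = 0 := by simpa using hcyc 1 0
  have h₀₁ : g 0 1 = 0 := by simpa using hcyc 0 1
  have hscalar : g 1 1 = g 0 0 := by simpa [h₁₀, h₀₁, sub_eq_zero] using hcyc 1 1
  refine hs ?_
  grind

lemma isConj_torus_of_trace_eq {s : Fˣ} (hs : (s : F) ≠ (s : F)⁻¹) {g : SL(2, F)}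
    (htr : g.1.trace = s + (s : F)⁻¹) : IsConj (torus s) g := by
  obtain ⟨v, w, hvw⟩ := exists_cyclic_vector s.ne_zero hs htr
  set D := v * (g 1 0 * v + g 1 1 * w) - w * (g 0 0 * v + g 0 1 * w)
  have hss : (s : F) * (s : F)⁻¹ = 1 := mul_inv_cancel₀ s.ne_zero
  rw [trace_fin_two] at htr
  have hdet := det_sl_two g
  have hk : ((s - (s : F)⁻¹) * D)⁻¹ * ((s - (s : F)⁻¹) * D) = 1 :=
    inv_mul_cancel₀ (mul_ne_zero (sub_ne_zero.mpr hs) hvw)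
  generalize ((s - (s : F)⁻¹) * D)⁻¹ = k at hk
  refine isConj_iff.mpr ⟨slOf
    (k * (g 0 0 * v + g 0 1 * w - (s : F)⁻¹ * v)) (g 0 0 * v + g 0 1 * w - s * v)
    (k * (g 1 0 * v + g 1 1 * w - (s : F)⁻¹ * w)) (g 1 0 * v + g 1 1 * w - s * w)
    (by grind), mul_inv_eq_iff_eq_mul.mpr (sl_two_ext ?_ ?_ ?_ ?_)⟩ <;>
    simp [mul_apply_sl_two] <;> grind

lemma orderOf_eq_of_trace_eq [Algebra F K] {s : Kˣ} (hs : (s : K) ≠ (s : K)⁻¹) {g : SL(2, F)}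
    (htr : algebraMap F K g.1.trace = s + (s : K)⁻¹) : orderOf g = orderOf s := by
  have hinj : Injective (Matrix.SpecialLinearGroup.map (n := Fin 2) (algebraMap F K)) :=
    fun g h hgh =>
      Subtype.ext (map_injective (algebraMap F K).injective (congrArg Subtype.val hgh))
  have hconj : IsConj (torus s) (Matrix.SpecialLinearGroup.map (algebraMap F K) g) :=
    isConj_torus_of_trace_eq hs (by
      rw [Matrix.SpecialLinearGroup.map_apply_coe, ← htr]; simp [trace_fin_two])
  obtain ⟨P, hP⟩ := isConj_iff.mp hconj
  rw [← orderOf_injective _ hinj, ← hP, ← orderOf_injective _ torus_injective, ← MulAut.conj_apply,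
    MulEquiv.orderOf_eq]

end ConjugacyInSL2

section FixedByFrobenius

variable {F K : Type*} [Field F] [Finite F] [Field K] [Algebra F K]

lemma mem_range_algebraMap_of_pow_card_eq {x : K} (hx : x ^ Nat.card F = x) :
    ∃ a : F, algebraMap F K a = x := by
  have := Fintype.ofFinite F
  rw [Nat.card_eq_fintype_card] at hx
  have hsplits := (FiniteField.isSplittingField_sub F F).splits
  rw [Algebra.algebraMap_self, Polynomial.map_id] at hsplits
  refine hsplits.mem_range_of_isRoot
    (FiniteField.X_pow_card_sub_X_ne_zero F Fintype.one_lt_card) (i := algebraMap F K) ?_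
  simp [hx]

lemma add_inv_pow_card (s : Kˣ) :
    ((s : K) + (s : K)⁻¹) ^ Nat.card F = s ^ Nat.card F + ((s : K) ^ Nat.card F)⁻¹ := by
  have := Fintype.ofFinite F
  rw [Nat.card_eq_fintype_card, ← inv_pow]
  exact map_add (FiniteField.frobeniusAlgHom F K) _ _

lemma eq_or_eq_inv_of_add_inv_eq {s t : K} (hs : s ≠ 0) (ht : t ≠ 0)
    (h : s + s⁻¹ = t + t⁻¹) : s = t ∨ s = t⁻¹ := by
  have : (s - t) * (s - t⁻¹) = 0 := by grind
  simpa [sub_eq_zero] using this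

lemma pow_card_sub_one_or_pow_card_add_one {s : Kˣ} {t : F}
    (hst : algebraMap F K t = s + (s : K)⁻¹) :
    s ^ (Nat.card F - 1) = 1 ∨ s ^ (Nat.card F + 1) = 1 := by
  have := Fintype.ofFinite F
  have hfrob : (s : K) ^ Nat.card F + ((s : K) ^ Nat.card F)⁻¹ = s + (s : K)⁻¹ := by
    rw [← add_inv_pow_card, ← hst, ← map_pow, Nat.card_eq_fintype_card, FiniteField.pow_card]
  rcases eq_or_eq_inv_of_add_inv_eq (pow_ne_zero _ s.ne_zero) s.ne_zero hfrob with h | h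
  · left
    rw [← mul_left_inj s, ← pow_succ, Nat.sub_add_cancel Nat.card_pos, one_mul]
    exact Units.ext (by simpa using h)
  · right
    rw [pow_succ, ← eq_inv_iff_mul_eq_one]
    exact Units.ext (by simpa using h)

lemma algebraMap_ne_of_orderOf_eq {ζ : Kˣ}
    (hζ : orderOf ζ = Nat.card F + 1) (a : F) : algebraMap F K a ≠ ζ := by
  intro ha
  have := Fintype.ofFinite F
  have hfix : ζ ^ Nat.card F = ζ := Units.ext (by
    rw [Units.val_pow_eq_pow_val, ← ha, ← map_pow, Nat.card_eq_fintype_card, FiniteField.pow_card])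
  have hsq : ζ ^ 2 = 1 := by
    nth_rw 1 [pow_two, ← hfix, ← pow_succ, ← hζ, pow_orderOf_eq_one]
  have hle := Nat.le_of_dvd two_pos (hζ ▸ orderOf_dvd_of_pow_eq_one hsq)
  have hcard : 1 < Nat.card F := Finite.one_lt_card
  lia

lemma exists_add_inv_eq [IsAlgClosed K] (t : K) : ∃ s : Kˣ, t = s + (s : K)⁻¹ := by
  obtain ⟨s, hs⟩ := IsAlgClosed.exists_root
    (Polynomial.X ^ 2 - Polynomial.C t * Polynomial.X + 1 : Polynomial K)
    (by rw [show (Polynomial.X ^ 2 - Polynomial.C t * Polynomial.X + 1 : Polynomial K).degree = 2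
      by compute_degree!]; decide)
  have hroot : s ^ 2 - t * s + 1 = 0 := by simpa using hs
  have hs0 : s ≠ 0 := by grind
  exact ⟨Units.mk0 s hs0, by rw [Units.val_mk0]; grind⟩

end FixedByFrobenius

section OrdersCharTwo

variable {F : Type*} [Field F]

/-- `t` is nonsplit if `X² - tX + 1` has no root in `F`. -/
def IsNonsplit (t : F) : Prop := ∀ r : F, t ≠ r + r⁻¹

lemma IsNonsplit.ne_zero {t : F} (ht : IsNonsplit t) : t ≠ 0 := by
  simpa using ht 0

variable [CharP F 2]

lemma even_card_of_charTwo [Finite F] : Even (Nat.card F) := by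
  have := Fintype.ofFinite F
  rw [Nat.card_eq_fintype_card, Nat.even_iff]
  exact FiniteField.even_card_of_char_two (ringChar.eq F 2)

lemma ne_inv_of_ne_one {s : Fˣ} (hs : s ≠ 1) : (s : F) ≠ (s : F)⁻¹ := by
  intro h
  have hs0 := s.ne_zero
  have : ((s : F) + 1) ^ 2 = 0 := by grind
  exact hs (Units.ext (by rw [Units.val_one]; grind))

lemma sq_eq_one_of_trace_eq_zero {g : SL(2, F)} (htr : g.1.trace = 0) : g ^ 2 = 1 := by
  have hdet := det_sl_two g
  rw [trace_fin_two] at htr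
  apply sl_two_ext <;> simp [pow_two, mul_apply_sl_two] <;> grind

variable [Finite F]

lemma pow_card_sub_one_or_pow_card_add_one_eq_one (g : SL(2, F)) :
    g ^ 2 = 1 ∨ g ^ (Nat.card F - 1) = 1 ∨ g ^ (Nat.card F + 1) = 1 := by
  obtain ⟨s, hs⟩ := exists_add_inv_eq (algebraMap F (AlgebraicClosure F) g.1.trace)
  have := charP_of_injective_algebraMap' F (A := AlgebraicClosure F) 2
  obtain rfl | hs1 := eq_or_ne s 1
  · refine .inl (sq_eq_one_of_trace_eq_zero ?_)
    simpa [CharTwo.add_self_eq_zero] using hs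
  · simp_rw [← orderOf_dvd_iff_pow_eq_one, orderOf_eq_of_trace_eq (ne_inv_of_ne_one hs1) hs,
      orderOf_dvd_iff_pow_eq_one]
    exact .inr (pow_card_sub_one_or_pow_card_add_one hs)

lemma pow_card_add_one_eq_one_of_isNonsplit {g : SL(2, F)} (hg : IsNonsplit g.1.trace) :
    g ^ (Nat.card F + 1) = 1 := by
  obtain ⟨s, hs⟩ := exists_add_inv_eq (algebraMap F (AlgebraicClosure F) g.1.trace)
  have := charP_of_injective_algebraMap' F (A := AlgebraicClosure F) 2
  have hs1 : s ≠ 1 := by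
    rintro rfl
    refine hg.ne_zero ?_
    simpa [CharTwo.add_self_eq_zero] using hs
  rw [← orderOf_dvd_iff_pow_eq_one, orderOf_eq_of_trace_eq (ne_inv_of_ne_one hs1) hs,
    orderOf_dvd_iff_pow_eq_one]
  refine (pow_card_sub_one_or_pow_card_add_one hs).resolve_left fun hpow => ?_
  have hfix : (s : AlgebraicClosure F) ^ Nat.card F = s := by
    rw [← Units.val_pow_eq_pow_val, ← Nat.sub_add_cancel Nat.card_pos, pow_succ, hpow, one_mul]
  obtain ⟨r, hr⟩ := mem_range_algebraMap_of_pow_card_eq hfix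
  refine hg r ((algebraMap F (AlgebraicClosure F)).injective ?_)
  rw [hs, map_add, map_inv₀, hr]

lemma exists_isNonsplit_orderOf_eq :
    ∃ t : F, IsNonsplit t ∧ ∀ g : SL(2, F), g.1.trace = t → orderOf g = Nat.card F + 1 := by
  let K := AlgebraicClosure F
  have : CharP K 2 := charP_of_injective_algebraMap' F 2
  have : NeZero ((Nat.card F + 1 : ℕ) : F) := ⟨by
    obtain ⟨m, hm⟩ := even_card_of_charTwo (F := F)
    simp [hm, CharTwo.add_self_eq_zero]⟩
  obtain ⟨ζ', hζ'⟩ := HasEnoughRootsOfUnity.exists_primitiveRoot K (Nat.card F + 1)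
  lift ζ' to Kˣ using hζ'.isUnit (Nat.succ_ne_zero _) with ζ
  have hζ : orderOf ζ = Nat.card F + 1 := (orderOf_units (y := ζ)).symm.trans hζ'.eq_orderOf.symm
  have hζ1 : ζ ≠ 1 := by
    rintro rfl
    simp [Nat.card_pos.ne'] at hζ
  have hpow : (ζ : K) ^ Nat.card F = (ζ : K)⁻¹ :=
    eq_inv_of_mul_eq_one_left (by rw [← pow_succ, hζ'.pow_eq_one])
  obtain ⟨t, ht⟩ := mem_range_algebraMap_of_pow_card_eq (F := F) (x := (ζ : K) + (ζ : K)⁻¹)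
    (by rw [add_inv_pow_card, hpow, inv_inv, add_comm])
  refine ⟨t, fun r hr => ?_, fun g hg => ?_⟩
  · have hsum : (ζ : K) + (ζ : K)⁻¹ = algebraMap F K r + (algebraMap F K r)⁻¹ := by
      rw [← ht, hr, map_add, map_inv₀]
    have hr0 : algebraMap F K r ≠ 0 := fun h0 => ne_inv_of_ne_one hζ1 (by
      rw [h0, _root_.inv_zero, add_zero] at hsum
      exact CharTwo.add_eq_zero.mp hsum)
    rcases eq_or_eq_inv_of_add_inv_eq ζ.ne_zero hr0 hsum with h | h
    · exact algebraMap_ne_of_orderOf_eq hζ r h.symm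
    · exact algebraMap_ne_of_orderOf_eq hζ r⁻¹ (by rw [map_inv₀, h])
  · rw [orderOf_eq_of_trace_eq (ne_inv_of_ne_one hζ1) (hg ▸ ht), hζ]

end OrdersCharTwo

section Generation

variable {F : Type*} [Field F]

/-- The upper unitriangular matrices. -/
def upper (t : F) : SL(2, F) := slOf 1 t 0 1 (by simp)

@[simp] lemma upper_coe (t : F) : (upper t).1 = !![1, t; 0, 1] := rfl

/-- The lower unitriangular matrices. -/
def lower (t : F) : SL(2, F) := slOf 1 0 t 1 (by simp)

@[simp] lemma lower_coe (t : F) : (lower t).1 = !![1, 0; t, 1] := rfl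

variable {H : Subgroup SL(2, F)}

lemma eq_top_of_upper_mem_of_lower_mem (hupper : ∀ t, upper t ∈ H) (hlower : ∀ t, lower t ∈ H) :
    H = ⊤ := by
  refine eq_top_iff.mpr fun g _ => SL2.transvection_induction (· ∈ H) ?_ (fun _ _ => mul_mem) g
  intro i j hij c
  fin_cases i <;> fin_cases j
  · exact absurd rfl hij
  · convert hupper c using 1
    apply sl_two_ext <;> simp [Matrix.SpecialLinearGroup.transvection_coe]
  · convert hlower c using 1
    apply sl_two_ext <;> simp [Matrix.SpecialLinearGroup.transvection_coe]
  · exact absurd rfl hij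

-- For `h = (a, b; c, d)`, `lower (-d / b) * h * lower (-a / b)` is the Weyl element exchanging the
-- two root subgroups.
lemma upper_mem_of_lower_mem (hlower : ∀ t, lower t ∈ H) {h : SL(2, F)} (hh : h ∈ H)
    (h₀₁ : h 0 1 ≠ 0) (t : F) : upper t ∈ H := by
  have hdet := det_sl_two h
  have hw : slOf 0 (h 0 1) (-(h 0 1)⁻¹) 0 (by simp [h₀₁]) ∈ H := by
    have : slOf 0 (h 0 1) (-(h 0 1)⁻¹) 0 (by simp [h₀₁]) =
        lower (-h 1 1 / h 0 1) * h * lower (-h 0 0 / h 0 1) := by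
      apply sl_two_ext <;> simp [mul_apply_sl_two] <;> grind
    exact this ▸ mul_mem (mul_mem (hlower _) hh) (hlower _)
  have hconj : upper t = slOf 0 (h 0 1) (-(h 0 1)⁻¹) 0 (by simp [h₀₁]) *
      lower (-t / h 0 1 ^ 2) * (slOf 0 (h 0 1) (-(h 0 1)⁻¹) 0 (by simp [h₀₁]))⁻¹ := by
    apply sl_two_ext <;> simp [mul_apply_sl_two, adjugate_fin_two] <;> grind
  exact hconj ▸ mul_mem (mul_mem hw (hlower _)) (inv_mem hw)

variable [CharP F 2] [PerfectRing F 2]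

lemma exists_sq_eq (a : F) : ∃ s : F, s ^ 2 = a := surjective_frobenius F 2 a

lemma lower_mem_of_torus_mem (htorus : ∀ s, torus s ∈ H) {u : F} (hu : u ≠ 0)
    (hmem : lower u ∈ H) (t : F) : lower t ∈ H := by
  obtain rfl | ht := eq_or_ne t 0
  · convert one_mem H
    apply sl_two_ext <;> simp
  obtain ⟨s, hs⟩ := exists_sq_eq (u / t)
  have hs0 : s ≠ 0 := by
    rintro rfl
    simp [hu, ht, eq_comm] at hs
  have hconj : lower t = torus (Units.mk0 s hs0) * lower u * (torus (Units.mk0 s hs0))⁻¹ := by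
    apply sl_two_ext <;> simp [mul_apply_sl_two, adjugate_fin_two] <;> grind
  exact hconj ▸ mul_mem (mul_mem (htorus _) hmem) (inv_mem (htorus _))

lemma lower_mem_of_apply_zero_zero_eq_zero (htorus : ∀ s, torus s ∈ H) {s₀ : Fˣ} (hs₀ : s₀ ≠ 1)
    {h : SL(2, F)} (hh : h ∈ H) (h₀₀ : h 0 0 = 0) (h₁₁ : h 1 1 ≠ 0) (t : F) : lower t ∈ H := by
  have hdet := det_sl_two h
  have hs₀' := ne_inv_of_ne_one hs₀
  have hlower : lower (h 1 0 * h 1 1 * (s₀ - (s₀ : F)⁻¹) / s₀) =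
      torus s₀ * (h * torus s₀ * h⁻¹) := by
    have := s₀.ne_zero
    apply sl_two_ext <;> simp [mul_apply_sl_two, adjugate_fin_two] <;> grind
  refine lower_mem_of_torus_mem htorus ?_
    (hlower ▸ mul_mem (htorus _) (mul_mem (mul_mem hh (htorus _)) (inv_mem hh))) t
  have h₁₀ : h 1 0 ≠ 0 := by grind
  exact div_ne_zero (mul_ne_zero (mul_ne_zero h₁₀ h₁₁) (sub_ne_zero.mpr hs₀')) s₀.ne_zero

lemma lower_mem_of_apply_ne_zero (htorus : ∀ s, torus s ∈ H) {s₀ : Fˣ} (hs₀ : s₀ ≠ 1)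
    {h : SL(2, F)} (hh : h ∈ H) (h₀₁ : h 0 1 ≠ 0) (h₁₀ : h 1 0 ≠ 0)
    (hdiag : h 0 0 ≠ 0 ∨ h 1 1 ≠ 0) (t : F) : lower t ∈ H := by
  have hdet := det_sl_two h
  by_cases h₀₀ : h 0 0 = 0
  · exact lower_mem_of_apply_zero_zero_eq_zero htorus hs₀ hh h₀₀ (by tauto) t
  by_cases h₁₁ : h 1 1 = 0
  · exact lower_mem_of_apply_zero_zero_eq_zero htorus hs₀ (inv_mem hh) (by simpa [adjugate_fin_two])
      (by simpa [adjugate_fin_two]) t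
  obtain ⟨s, hs⟩ := exists_sq_eq (h 0 1 * h 1 0 / (h 0 0 * h 1 1))
  have hs0 : s ≠ 0 := by
    rintro rfl
    grind
  have hconj₀₀ : (h⁻¹ * torus (Units.mk0 s hs0) * h) 0 0 =
      h 0 0 * h 1 1 * s - h 0 1 * h 1 0 * s⁻¹ := by
    simp [mul_apply_sl_two, adjugate_fin_two]
    ring
  have hconj₁₁ : (h⁻¹ * torus (Units.mk0 s hs0) * h) 1 1 =
      h 0 0 * h 1 1 * s⁻¹ - h 0 1 * h 1 0 * s := by
    simp [mul_apply_sl_two, adjugate_fin_two]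
    ring
  refine lower_mem_of_apply_zero_zero_eq_zero htorus hs₀
    (mul_mem (mul_mem (inv_mem hh) (htorus (Units.mk0 s hs0))) hh) ?_ ?_ t
  · grind
  · intro h0
    have : (h 0 0 * h 1 1 + h 0 1 * h 1 0) ^ 2 = 0 := by grind
    grind

lemma eq_top_of_torus_mem (htorus : ∀ s, torus s ∈ H) {s₀ : Fˣ} (hs₀ : s₀ ≠ 1)
    {h : SL(2, F)} (hh : h ∈ H) (h₀₁ : h 0 1 ≠ 0) (h₁₀ : h 1 0 ≠ 0)
    (hdiag : h 0 0 ≠ 0 ∨ h 1 1 ≠ 0) : H = ⊤ :=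
  have hlower := lower_mem_of_apply_ne_zero htorus hs₀ hh h₀₁ h₁₀ hdiag
  eq_top_of_upper_mem_of_lower_mem (upper_mem_of_lower_mem hlower hh h₀₁) hlower

end Generation

section Types

variable {F : Type*} [Field F] {l : Fˣ}

lemma torus_mem_of_generator (hl : ∀ s, s ∈ zpowers l) {H : Subgroup SL(2, F)}
    (hmem : torus l ∈ H) (s : Fˣ) : torus s ∈ H := by
  obtain ⟨n, rfl⟩ := mem_zpowers_iff.mp (hl s)
  exact map_zpow torus l n ▸ zpow_mem hmem n

lemma exists_generator_ne_one [Finite F] (hF : 2 < Nat.card F) :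
    ∃ l : Fˣ, (∀ s, s ∈ zpowers l) ∧ l ≠ 1 := by
  obtain ⟨l, hl⟩ := IsCyclic.exists_generator (α := Fˣ)
  refine ⟨l, hl, ?_⟩
  rintro rfl
  have := orderOf_eq_card_of_forall_mem_zpowers hl
  rw [orderOf_one, Nat.card_units] at this
  omega

variable [CharP F 2]

lemma orderOf_eq_card_sub_one (hl : ∀ s, s ∈ zpowers l) (hl1 : l ≠ 1) {g : SL(2, F)}
    (htr : g.1.trace = l + (l : F)⁻¹) : orderOf g = Nat.card F - 1 := by
  rw [orderOf_eq_of_trace_eq (K := F) (ne_inv_of_ne_one hl1) htr,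
    orderOf_eq_card_of_forall_mem_zpowers hl, Nat.card_units]

lemma orderOf_eq_two_of_trace_eq_zero {g : SL(2, F)} (hg : g ≠ 1) (htr : g.1.trace = 0) :
    orderOf g = 2 :=
  orderOf_eq_prime (sq_eq_one_of_trace_eq_zero htr) hg

lemma add_inv_ne_one (hF : 4 < Nat.card F) (hl : ∀ s, s ∈ zpowers l) : (l : F) + (l : F)⁻¹ ≠ 1 := by
  intro h
  have hl0 := l.ne_zero
  have hcube : l ^ 3 = 1 := Units.ext (by push_cast; grind)
  have := Nat.le_of_dvd (by norm_num) (orderOf_dvd_of_pow_eq_one hcube)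
  rw [orderOf_eq_card_of_forall_mem_zpowers hl, Nat.card_units] at this
  omega

variable [Finite F]

-- By Fricke's identity, `hκ` says that the commutator of the two matrices has trace `≠ 2`.
lemma exists_closure_torus_eq_top (hl : ∀ s, s ∈ zpowers l) (hl1 : l ≠ 1) {β γ : F}
    (hβγ : β ≠ 0 ∨ γ ≠ 0)
    (hκ : (l + (l : F)⁻¹) ^ 2 + β ^ 2 + γ ^ 2 + (l + (l : F)⁻¹) * β * γ ≠ 0) :
    ∃ y : SL(2, F), y ≠ 1 ∧ y.1.trace = β ∧ (torus l * y).1.trace = γ ∧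
      closure {torus l, y} = ⊤ := by
  have hl0 := l.ne_zero
  have hα : (l : F) + (l : F)⁻¹ ≠ 0 := by
    have := ne_inv_of_ne_one hl1
    grind
  obtain ⟨a, ha⟩ : ∃ a : F, a * (l + (l : F)⁻¹) = γ + β * (l : F)⁻¹ :=
    ⟨_, div_mul_cancel₀ _ hα⟩
  have hoff : a * (a + β) + 1 ≠ 0 := by grind
  let y : SL(2, F) := slOf a 1 (a * (a + β) + 1) (a + β) (by grind)
  have htr : y.1.trace = β := by
    simp [y, trace_fin_two]
    grind
  have htr' : (torus l * y).1.trace = γ := by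
    simp [y, trace_fin_two]
    grind
  refine ⟨y, fun hy => ?_, htr, htr', ?_⟩
  · simpa [y] using congrArg (fun g : SL(2, F) => g 0 1) hy
  · refine eq_top_of_torus_mem
      (torus_mem_of_generator hl (subset_closure (Set.mem_insert _ _))) hl1
      (subset_closure (Set.mem_insert_of_mem _ rfl)) (by simp [y]) (by simpa [y]) ?_
    by_contra! h
    simp [y] at h
    grind

lemma hasType_of_trace (hl : ∀ s, s ∈ zpowers l) (hl1 : l ≠ 1) {β γ : F} {m n : ℕ}
    (hβγ : β ≠ 0 ∨ γ ≠ 0)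
    (hκ : (l + (l : F)⁻¹) ^ 2 + β ^ 2 + γ ^ 2 + (l + (l : F)⁻¹) * β * γ ≠ 0)
    (hm : ∀ g : SL(2, F), g ≠ 1 → g.1.trace = β → orderOf g = m)
    (hn : ∀ g : SL(2, F), g.1.trace = γ → orderOf g = n) :
    HasType SL(2, F) (Nat.card F - 1) m n := by
  obtain ⟨y, hy, hβ, hγ, htop⟩ := exists_closure_torus_eq_top hl hl1 hβγ hκ
  exact ⟨torus l, y, htop, orderOf_eq_card_sub_one hl hl1 (trace_torus l), hm y hy hβ, hn _ hγ⟩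

lemma hasType_sub_one_sub_one_add_one (hF : 2 < Nat.card F) :
    HasType SL(2, F) (Nat.card F - 1) (Nat.card F - 1) (Nat.card F + 1) := by
  obtain ⟨l, hl, hl1⟩ := exists_generator_ne_one hF
  obtain ⟨τ, hτ, hord⟩ := exists_isNonsplit_orderOf_eq (F := F)
  have hτl := hτ (l ^ 2)
  exact hasType_of_trace hl hl1 (.inr hτ.ne_zero) (by have := hτ.ne_zero; grind)
    (fun _ _ => orderOf_eq_card_sub_one hl hl1) hord

lemma hasType_sub_one_add_one_add_one (hF : 2 < Nat.card F) :
    HasType SL(2, F) (Nat.card F - 1) (Nat.card F + 1) (Nat.card F + 1) := by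
  obtain ⟨l, hl, hl1⟩ := exists_generator_ne_one hF
  obtain ⟨τ, hτ, hord⟩ := exists_isNonsplit_orderOf_eq (F := F)
  obtain ⟨m, hm⟩ := exists_sq_eq (l : F)
  have hα := ne_inv_of_ne_one hl1
  refine hasType_of_trace hl hl1 (.inl hτ.ne_zero) (fun hκ => hτ m ?_) (fun g _ => hord g) hord
  have : (τ + (m + m⁻¹)) ^ 2 = 0 := by grind
  grind

lemma hasType_sub_one_two_add_one (hF : 2 < Nat.card F) :
    HasType SL(2, F) (Nat.card F - 1) 2 (Nat.card F + 1) := by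
  obtain ⟨l, hl, hl1⟩ := exists_generator_ne_one hF
  obtain ⟨τ, hτ, hord⟩ := exists_isNonsplit_orderOf_eq (F := F)
  refine hasType_of_trace hl hl1 (.inr hτ.ne_zero) (fun hκ => hτ l ?_)
    (fun _ => orderOf_eq_two_of_trace_eq_zero) hord
  have : (τ + (l + (l : F)⁻¹)) ^ 2 = 0 := by grind
  grind

lemma hasType_sub_one_two_sub_one (hF : 4 < Nat.card F) :
    HasType SL(2, F) (Nat.card F - 1) 2 (Nat.card F - 1) := by
  obtain ⟨l, hl, hl1⟩ := exists_generator_ne_one (by omega : 2 < Nat.card F)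
  have hodd : Odd (Nat.card F - 1) :=
    Nat.Even.sub_odd (by omega) even_card_of_charTwo odd_one
  have hord : orderOf (l ^ 2) = Nat.card F - 1 := by
    rw [Nat.Coprime.orderOf_pow] <;> rw [orderOf_eq_card_of_forall_mem_zpowers hl, Nat.card_units]
    exact hodd.coprime_two_right
  have hl2 : l ^ 2 ≠ 1 := fun h => by
    rw [h, orderOf_one] at hord
    omega
  have hα := ne_inv_of_ne_one hl1
  have hα1 := add_inv_ne_one hF hl
  have hγ := ne_inv_of_ne_one hl2
  refine hasType_of_trace (γ := ↑(l ^ 2) + (↑(l ^ 2))⁻¹) hl hl1 (.inr (by grind)) ?_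
    (fun _ => orderOf_eq_two_of_trace_eq_zero)
    (fun g hg => (orderOf_eq_of_trace_eq (K := F) hγ hg).trans hord)
  intro hκ
  have : ((l + (l : F)⁻¹) * (1 + (l + (l : F)⁻¹))) ^ 2 = 0 := by push_cast at hκ; grind
  grind

lemma hasType_sub_one_sub_one_sub_one (hF : 4 < Nat.card F) :
    HasType SL(2, F) (Nat.card F - 1) (Nat.card F - 1) (Nat.card F - 1) := by
  obtain ⟨l, hl, hl1⟩ := exists_generator_ne_one (by omega : 2 < Nat.card F)
  have hα1 := add_inv_ne_one hF hl
  have hα := ne_inv_of_ne_one hl1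
  refine hasType_of_trace hl hl1 (β := l + (l : F)⁻¹) (.inl (by grind)) ?_
    (fun _ _ => orderOf_eq_card_sub_one hl hl1) (fun _ => orderOf_eq_card_sub_one hl hl1)
  intro hκ
  have : (l + (l : F)⁻¹) ^ 2 * (1 + (l + (l : F)⁻¹)) = 0 := by grind
  grind

lemma eq_top_of_trace_eq_of_isNonsplit (hl : ∀ s, s ∈ zpowers l) (hl1 : l ≠ 1)
    {H : Subgroup SL(2, F)} {g y : SL(2, F)} (hg : g ∈ H) (htr : g.1.trace = l + (l : F)⁻¹)
    (hy : y ∈ H) (hns : IsNonsplit y.1.trace) : H = ⊤ := by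
  obtain ⟨P, hP⟩ := isConj_iff.mp (isConj_torus_of_trace_eq (ne_inv_of_ne_one hl1) htr)
  set h := P⁻¹ * y * P with hh
  have htrh : y.1.trace = h 0 0 + h 1 1 := by
    rw [← trace_fin_two, hh, Matrix.SpecialLinearGroup.coe_mul, trace_mul_comm,
      ← Matrix.SpecialLinearGroup.coe_mul]
    simp only [mul_inv_cancel_left]
  have hdet := det_sl_two h
  have hsplit := hns (h 0 0)
  have hoff : h 0 1 * h 1 0 ≠ 0 := by grind
  refine comap_injective (MulAut.conj P).surjective (f := (MulAut.conj P).toMonoidHom)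
    ((eq_top_of_torus_mem (torus_mem_of_generator hl ?_) hl1 (h := h) ?_
    (left_ne_zero_of_mul hoff) (right_ne_zero_of_mul hoff) (by grind)).trans (comap_top _).symm)
  · simpa [mem_comap, hP]
  · simpa [mem_comap, hh, mul_assoc]

lemma two_mul_card_range_add_inv_le :
    2 * (Set.range fun r : F => r + r⁻¹).ncard ≤ Nat.card F := by
  classical
  have := Fintype.ofFinite F
  rw [← Set.image_univ, ← Finset.coe_univ, ← Finset.coe_image, Set.ncard_coe_finset,
    Nat.card_eq_fintype_card, ← Finset.card_univ]
  refine Finset.mul_card_image_le_card _ _ fun t ht => ?_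
  obtain ⟨r, -, rfl⟩ := Finset.mem_image.mp ht
  have htwo : ∃ u v : F, u ≠ v ∧ u + u⁻¹ = r + r⁻¹ ∧ v + v⁻¹ = r + r⁻¹ := by
    by_cases hr : r = r⁻¹
    · exact ⟨0, 1, zero_ne_one, by grind, by grind⟩
    · exact ⟨r, r⁻¹, hr, rfl, by grind⟩
  obtain ⟨u, v, huv, hu, hv⟩ := htwo
  exact Finset.one_lt_card.mpr ⟨u, by simpa using hu, v, by simpa using hv, huv⟩

lemma exists_isNonsplit_add_isNonsplit (r : F) :
    ∃ β : F, IsNonsplit β ∧ IsNonsplit (β + (r + r⁻¹)) := by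
  set δ := r + r⁻¹
  set B := Set.range fun r : F => r + r⁻¹
  have hBcard : 2 * B.ncard ≤ Nat.card F := two_mul_card_range_add_inv_le
  have hinter : ((B ∩ (· + δ) '' B)).Nonempty := ⟨δ, ⟨r, rfl⟩, 0, ⟨0, by simp⟩, zero_add δ⟩
  have hunion := Set.ncard_union_add_ncard_inter B ((· + δ) '' B)
  rw [Set.ncard_image_of_injective B (add_left_injective δ)] at hunion
  have hne : B ∪ (· + δ) '' B ≠ Set.univ := fun huniv => by
    have := (Set.ncard_pos (Set.toFinite _)).mpr hinter
    rw [huniv, Set.ncard_univ] at hunion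
    omega
  obtain ⟨β, hβ⟩ := (Set.ne_univ_iff_exists_notMem _).mp hne
  refine ⟨β, fun s hs => hβ (.inl ⟨s, hs.symm⟩), fun s hs => hβ (.inr ⟨β + δ, ⟨s, hs.symm⟩, ?_⟩)⟩
  simp only [add_assoc, CharTwo.add_self_eq_zero, add_zero]

/-- Unlike for the other types, the orders of `y` and `x * y` may be proper divisors of `q + 1`. -/
lemma exists_closure_pair_eq_top_of_isNonsplit (hF : 2 < Nat.card F) :
    ∃ x y : SL(2, F), closure {x, y} = ⊤ ∧ x ≠ 1 ∧ x.1.trace = 0 ∧ IsNonsplit y.1.trace ∧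
      IsNonsplit (x * y).1.trace := by
  obtain ⟨l, hl, hl1⟩ := exists_generator_ne_one hF
  obtain ⟨m, hm⟩ := exists_sq_eq (l : F)
  obtain ⟨β, hβ, hβδ⟩ := exists_isNonsplit_add_isNonsplit m
  have hl0 := l.ne_zero
  have hδ : m + m⁻¹ ≠ 0 := by
    have := ne_inv_of_ne_one hl1
    grind
  let x : SL(2, F) := upper (m + m⁻¹)
  let y : SL(2, F) := slOf 0 1 1 β (by grind)
  have hcomm : (x * y * x⁻¹ * y⁻¹).1.trace = l + (l : F)⁻¹ := by
    simp [x, y, trace_fin_two, adjugate_fin_two]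
    grind
  have hx : x ∈ closure {x, y} := subset_closure (Set.mem_insert _ _)
  have hy : y ∈ closure {x, y} := subset_closure (Set.mem_insert_of_mem _ rfl)
  have hytr : y.1.trace = β := by simp [y, trace_fin_two]
  refine ⟨x, y, eq_top_of_trace_eq_of_isNonsplit hl hl1
    (mul_mem (mul_mem (mul_mem hx hy) (inv_mem hx)) (inv_mem hy)) hcomm hy (hytr ▸ hβ),
    fun h => ?_, ?_, hytr ▸ hβ, ?_⟩
  · exact hδ (by simpa [x] using congrArg (fun g : SL(2, F) => g 0 1) h)
  · simp [x, trace_fin_two, CharTwo.add_self_eq_zero]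
  · convert hβδ using 1
    simp [x, y, trace_fin_two]
    ring

end Types

section Reality

variable {G H S ι : Type*} [Group G] [Group H] [Group S]

/-- Every generating pair of `G` is inverted, elementwise, by an inner automorphism. This makes all
Beauville structures strongly real with the identity as the common automorphism. -/
def InvertsGeneratingPairs (G : Type*) [Group G] : Prop :=
  ∀ x y : G, closure {x, y} = ⊤ → ∃ g : G, g * x * g⁻¹ = x⁻¹ ∧ g * y * g⁻¹ = y⁻¹

lemma InvertsGeneratingPairs.map (f : G ≃* H) (hG : InvertsGeneratingPairs G) :
    InvertsGeneratingPairs H := fun x y hxy => by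
  obtain ⟨g, hx, hy⟩ := hG (f.symm x) (f.symm y)
    (closure_pair_map_eq_top (f := f.symm.toMonoidHom) f.symm.surjective hxy)
  exact ⟨f g, by simpa using congrArg f hx, by simpa using congrArg f hy⟩

lemma InvertsGeneratingPairs.pi (hS : InvertsGeneratingPairs S) :
    InvertsGeneratingPairs (ι → S) := fun x y hxy => by
  choose g hx hy using fun i => hS (x i) (y i) (closure_pair_apply_eq_top hxy i)
  exact ⟨g, funext hx, funext hy⟩

lemma InvertsGeneratingPairs.isStronglyRealStructure (hG : InvertsGeneratingPairs G)
    {x₁ y₁ x₂ y₂ : G} (h : IsBeauvilleStructure x₁ y₁ x₂ y₂) :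
    IsStronglyRealStructure x₁ y₁ x₂ y₂ := by
  obtain ⟨g₁, hx₁, hy₁⟩ := hG x₁ y₁ h.1
  obtain ⟨g₂, hx₂, hy₂⟩ := hG x₂ y₂ h.2.1
  exact ⟨MulEquiv.refl G, g₁, g₂, hx₁, hy₁, hx₂, hy₂⟩

end Reality

section RealityInSL2

variable {F : Type*} [Field F] {x y : SL(2, F)}

lemma ringCommutator_mul_left (x y : SL(2, F)) :
    (x.1 * y.1 - y.1 * x.1) * x.1 = (x⁻¹).1 * (x.1 * y.1 - y.1 * x.1) := by
  have hdet := det_sl_two x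
  ext i j
  fin_cases i <;> fin_cases j <;> simp [mul_apply, adjugate_fin_two] <;> grind

lemma ringCommutator_mul_right (x y : SL(2, F)) :
    (x.1 * y.1 - y.1 * x.1) * y.1 = (y⁻¹).1 * (x.1 * y.1 - y.1 * x.1) := by
  rw [← neg_sub, neg_mul, mul_neg, ringCommutator_mul_left]

lemma exists_mul_eq_mul_of_mem_closure {C : Matrix (Fin 2) (Fin 2) F}
    (hx : C * x.1 = (x⁻¹).1 * C) (hy : C * y.1 = (y⁻¹).1 * C) {g : SL(2, F)}
    (hg : g ∈ closure {x, y}) : ∃ d : SL(2, F), C * g.1 = d.1 * C := by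
  induction hg using closure_induction with
  | mem g hg => rcases hg with rfl | rfl <;> exact ⟨_, ‹_›⟩
  | one => exact ⟨1, by simp⟩
  | mul g h _ _ ihg ihh =>
    obtain ⟨d, hd⟩ := ihg
    obtain ⟨d', hd'⟩ := ihh
    refine ⟨d * d', ?_⟩
    rw [Matrix.SpecialLinearGroup.coe_mul, ← mul_assoc, hd, mul_assoc, hd', ← mul_assoc,
      Matrix.SpecialLinearGroup.coe_mul]
  | inv g _ ih =>
    obtain ⟨d, hd⟩ := ih
    refine ⟨d⁻¹, ?_⟩
    calc C * (g⁻¹).1 = (d⁻¹ * d).1 * C * (g⁻¹).1 := by simp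
      _ = (d⁻¹).1 * (d.1 * C) * (g⁻¹).1 := by
        rw [Matrix.SpecialLinearGroup.coe_mul, mul_assoc _ d.1]
      _ = (d⁻¹).1 * C * (g * g⁻¹).1 := by
        rw [← hd, Matrix.SpecialLinearGroup.coe_mul]
        simp only [mul_assoc]
      _ = (d⁻¹).1 * C := by simp

-- The right kernel of `C` is invariant under `SL(2, F)`, so it is zero or everything.
lemma eq_zero_or_det_ne_zero {C : Matrix (Fin 2) (Fin 2) F}
    (hC : ∀ g : SL(2, F), ∃ d : SL(2, F), C * g.1 = d.1 * C) : C = 0 ∨ C.det ≠ 0 := by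
  refine or_iff_not_imp_right.mpr fun hdet => ?_
  obtain ⟨v, hv, hCv⟩ := exists_mulVec_eq_zero_iff.mpr (not_not.mp hdet)
  have hker (g : SL(2, F)) : C *ᵥ (g.1 *ᵥ v) = 0 := by
    obtain ⟨d, hd⟩ := hC g
    rw [mulVec_mulVec, hd, ← mulVec_mulVec, hCv, mulVec_zero]
  have hv' : v 0 ≠ 0 ∨ v 1 ≠ 0 := by
    by_contra! h
    exact hv (by ext i; fin_cases i <;> simp [h])
  have hrow (i : Fin 2) : C i 0 = 0 ∧ C i 1 = 0 := by
    have h := congrFun hCv i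
    have hu := congrFun (hker (upper 1)) i
    have hl := congrFun (hker (lower 1)) i
    simp only [mulVec, dotProduct, Fin.sum_univ_two, upper_coe, lower_coe, of_apply, cons_val',
      cons_val_zero, cons_val_one, cons_val_fin_one, Pi.zero_apply] at h hu hl
    grind
  ext i j
  fin_cases j
  · exact (hrow i).1
  · exact (hrow i).2

lemma not_commute_of_closure_pair_eq_top (hxy : closure {x, y} = ⊤) : ¬Commute x y := by
  intro hcomm
  have := isMulCommutative_closure (k := {x, y}) (by
    rintro a (rfl | rfl) b (rfl | rfl) <;> first | rfl | exact hcomm | exact hcomm.symm)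
  have hul : upper (1 : F) * lower 1 = lower 1 * upper 1 :=
    setLike_mul_comm (s := closure {x, y}) (hxy ▸ mem_top _) (hxy ▸ mem_top _)
  simpa [mul_apply_sl_two] using congrArg (fun g : SL(2, F) => g 0 0) hul

lemma det_ringCommutator_ne_zero (hxy : closure {x, y} = ⊤) :
    (x.1 * y.1 - y.1 * x.1).det ≠ 0 := by
  refine (eq_zero_or_det_ne_zero fun g => exists_mul_eq_mul_of_mem_closure
    (ringCommutator_mul_left x y) (ringCommutator_mul_right x y) (hxy ▸ mem_top g)).resolve_left ?_
  exact fun h => not_commute_of_closure_pair_eq_top hxy (Subtype.ext (sub_eq_zero.mp h))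

lemma invertsGeneratingPairs_sl_two (hsq : ∀ a : F, IsSquare a) :
    InvertsGeneratingPairs SL(2, F) := fun x y hxy => by
  set C := x.1 * y.1 - y.1 * x.1
  have hdet : C.det ≠ 0 := det_ringCommutator_ne_zero hxy
  obtain ⟨k, hk⟩ := hsq C.det⁻¹
  let g : SL(2, F) := ⟨k • C, by
    rw [det_smul, Fintype.card_fin, pow_two, ← hk, inv_mul_cancel₀ hdet]⟩
  have hscale {a b : Matrix (Fin 2) (Fin 2) F} (hab : C * a = b * C) :
      k • C * a = b * (k • C) := by
    rw [smul_mul, hab, Matrix.mul_smul]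
  exact ⟨g, mul_inv_eq_of_eq_mul (Subtype.ext (hscale (ringCommutator_mul_left x y))),
    mul_inv_eq_of_eq_mul (Subtype.ext (hscale (ringCommutator_mul_right x y)))⟩

end RealityInSL2

section ProjectiveSpecialLinear

variable {F : Type*} [Field F] [CharP F 2]

lemma center_sl_two_eq_bot : center SL(2, F) = ⊥ := by
  refine eq_bot_iff.mpr fun z hz => mem_bot.mpr ?_
  obtain ⟨r, hr, hz⟩ := Matrix.SpecialLinearGroup.mem_center_iff.mp hz
  have hr1 : r = 1 := CharTwo.sq_injective (hr.trans (one_pow 2).symm)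
  exact Subtype.ext (by rw [← hz, hr1, map_one, Matrix.SpecialLinearGroup.coe_one])

variable (F) in
/-- In characteristic two, `PSL(2, F)` and `SL(2, F)` coincide. -/
noncomputable def pslEquiv : PSL(2, F) ≃* SL(2, F) :=
  (QuotientGroup.quotientMulEquivOfEq center_sl_two_eq_bot).trans QuotientGroup.quotientBot

variable [PerfectRing F 2] {ι : Type*}

theorem isStronglyRealStructure_pi_psl_two {x₁ y₁ x₂ y₂ : ι → PSL(2, F)}
    (h : IsBeauvilleStructure x₁ y₁ x₂ y₂) : IsStronglyRealStructure x₁ y₁ x₂ y₂ :=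
  have hsl : InvertsGeneratingPairs SL(2, F) := invertsGeneratingPairs_sl_two fun a =>
    let ⟨s, hs⟩ := exists_sq_eq a
    ⟨s, hs.symm.trans (pow_two s)⟩
  (hsl.map (pslEquiv F).symm).pi.isStronglyRealStructure h

end ProjectiveSpecialLinear

section Existence

variable {F ι : Type*} [Field F] [CharP F 2]

lemma ne_one_of_isNonsplit {g : SL(2, F)} (hg : IsNonsplit g.1.trace) : g ≠ 1 := by
  rintro rfl
  exact hg.ne_zero (by simp [CharTwo.two_eq_zero])

variable [Finite F]

lemma isSimpleGroup_sl_two (hF : 2 < Nat.card F) : IsSimpleGroup SL(2, F) := by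
  have heven := even_card_of_charTwo (F := F)
  have := Matrix.ProjectiveSpecialLinearGroup.rank_two_simple (F := F) (by grind)
  exact (pslEquiv F).isSimpleGroup_congr.mp this

lemma isPerfect_sl_two (hF : 2 < Nat.card F) : Group.IsPerfect SL(2, F) := by
  obtain ⟨l, -, hl⟩ := exists_generator_ne_one hF
  have hsq : (l : F) ^ 2 ≠ 1 := fun h =>
    hl (Units.ext (CharTwo.sq_injective (h.trans (one_pow 2).symm)))
  exact ⟨SL2.commutator_eq_top l.ne_zero hsq⟩

lemma hasType_two_add_one_add_one_of_prime (hF : 2 < Nat.card F)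
    (hp : (Nat.card F + 1).Prime) : HasType SL(2, F) 2 (Nat.card F + 1) (Nat.card F + 1) := by
  obtain ⟨x, y, htop, hx1, hx, hy, hxy⟩ := exists_closure_pair_eq_top_of_isNonsplit hF
  have := Fact.mk hp
  have hord {g : SL(2, F)} (hg : IsNonsplit g.1.trace) : orderOf g = Nat.card F + 1 :=
    orderOf_eq_prime (pow_card_add_one_eq_one_of_isNonsplit hg) (ne_one_of_isNonsplit hg)
  exact ⟨x, y, htop, orderOf_eq_two_of_trace_eq_zero hx1 hx, hord hy, hord hxy⟩

lemma coprime_sub_one_add_one_of_even {q : ℕ} (hq : Even q) (hq0 : q ≠ 0) :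
    (q - 1).Coprime (q + 1) := by
  have hodd : Odd (q - 1) := Nat.Even.sub_odd (by omega) hq odd_one
  rw [show q + 1 = 2 + (q - 1) by omega, Nat.coprime_add_self_right]
  exact hodd.coprime_two_right

lemma exists_isBeauvilleStructure_sl_two (hF : 4 < Nat.card F) :
    ∃ x₁ y₁ x₂ y₂ : SL(2, F), IsBeauvilleStructure x₁ y₁ x₂ y₂ := by
  have heven := even_card_of_charTwo (F := F)
  obtain ⟨x₁, y₁, htop₁, -, hx₁, hy₁, hxy₁⟩ :=
    exists_closure_pair_eq_top_of_isNonsplit (F := F) (by omega)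
  obtain ⟨x₂, y₂, htop₂, hx₂, hy₂, hxy₂⟩ := hasType_sub_one_sub_one_sub_one hF
  have hodd : Odd (Nat.card F - 1) := Nat.Even.sub_odd (by omega) heven odd_one
  have hcop : (2 * (Nat.card F + 1)).Coprime (Nat.card F - 1) :=
    hodd.coprime_two_left.mul_left (coprime_sub_one_add_one_of_even heven (by omega)).symm
  refine ⟨x₁, y₁, x₂, y₂, isBeauvilleStructure_of_coprime hcop htop₁ htop₂ ?_ ?_⟩
  · refine Fin.forall_fin_succ.mpr ⟨?_, Fin.forall_fin_two.mpr ⟨?_, ?_⟩⟩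
    · exact (pow_mul x₁ _ _).trans (by rw [sq_eq_one_of_trace_eq_zero hx₁, one_pow])
    · exact (pow_mul' y₁ _ _).trans
        (by rw [pow_card_add_one_eq_one_of_isNonsplit hy₁, one_pow])
    · exact (pow_mul' (x₁ * y₁) _ _).trans
        (by rw [pow_card_add_one_eq_one_of_isNonsplit hxy₁, one_pow])
  · refine Fin.forall_fin_succ.mpr ⟨?_, Fin.forall_fin_two.mpr ⟨?_, ?_⟩⟩
    · exact hx₂ ▸ pow_orderOf_eq_one x₂
    · exact hy₂ ▸ pow_orderOf_eq_one y₂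
    · exact hxy₂ ▸ pow_orderOf_eq_one (x₂ * y₂)

lemma pairwise_coprime_vec {a b c : ℕ} (hab : a.Coprime b) (hac : a.Coprime c)
    (hbc : b.Coprime c) : Pairwise (Nat.Coprime on ![a, b, c]) := by
  intro i j hij
  fin_cases i <;> fin_cases j <;>
    first | exact absurd rfl hij | assumption | (apply Nat.Coprime.symm; assumption)

lemma exists_isBeauvilleStructure_pi_sl_two [Finite ι] (hF : 2 < Nat.card F)
    (hι : 2 ≤ Nat.card ι) (h2gen : ∃ a b : ι → SL(2, F), closure {a, b} = ⊤) :
    ∃ x₁ y₁ x₂ y₂ : ι → SL(2, F), IsBeauvilleStructure x₁ y₁ x₂ y₂ := by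
  have heven := even_card_of_charTwo (F := F)
  have := isSimpleGroup_sl_two hF
  have := isPerfect_sl_two hF
  have hA := hasType_sub_one_sub_one_add_one hF
  have hB := hasType_sub_one_add_one_add_one hF
  have hC := hasType_sub_one_two_add_one hF
  have hodd₁ : Nat.Coprime 2 (Nat.card F - 1) :=
    (Nat.Even.sub_odd (by omega) heven odd_one).coprime_two_left
  have hodd₂ : Nat.Coprime 2 (Nat.card F + 1) := heven.add_one.coprime_two_left
  have hcop := coprime_sub_one_add_one_of_even heven (by omega)
  have hne₁ : Nat.card F - 1 ≠ 1 := by omega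
  have hne₂ : Nat.card F ≠ 0 := by omega
  have horder := pow_card_sub_one_or_pow_card_add_one_eq_one (F := F)
  rcases eq_or_ne (Nat.card F) 4 with h4 | h4
  · have hE := hasType_two_add_one_add_one_of_prime hF (by norm_num [h4])
    refine exists_isBeauvilleStructure_pi (o := ![2, Nat.card F + 1, Nat.card F - 1]) hι
      ?_ ?_ ?_ hE hB.swap_left.swap_right hA.swap_right.swap_left
      hC.swap_left.swap_right h2gen
    · exact pairwise_coprime_vec hodd₂ hodd₁ hcop.symm
    · simp [Fin.forall_fin_succ, hne₁, hne₂]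
    · exact fun g => by simpa [Fin.exists_fin_succ, or_comm] using horder g
  · have hD := hasType_sub_one_two_sub_one (F := F) (by grind)
    refine exists_isBeauvilleStructure_pi (o := ![2, Nat.card F - 1, Nat.card F + 1]) hι
      ?_ ?_ ?_ hD.swap_left hA hB hC.swap_left h2gen
    · exact pairwise_coprime_vec hodd₁ hodd₂ hcop
    · simp [Fin.forall_fin_succ, hne₁, hne₂]
    · exact fun g => by simpa [Fin.exists_fin_succ] using horder g

theorem exists_isBeauvilleStructure_pi_psl_two [Finite ι] [Nonempty ι] (hF : 2 < Nat.card F)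
    (hcard : (Nat.card F, Nat.card ι) ≠ (4, 1))
    (h2gen : ∃ a b : ι → PSL(2, F), closure {a, b} = ⊤) :
    ∃ x₁ y₁ x₂ y₂ : ι → PSL(2, F), IsBeauvilleStructure x₁ y₁ x₂ y₂ := by
  let f : (ι → PSL(2, F)) ≃* (ι → SL(2, F)) := MulEquiv.piCongrRight fun _ => pslEquiv F
  suffices ∃ x₁ y₁ x₂ y₂ : ι → SL(2, F), IsBeauvilleStructure x₁ y₁ x₂ y₂ by
    obtain ⟨x₁, y₁, x₂, y₂, h⟩ := this
    exact ⟨_, _, _, _, h.map f.symm⟩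
  obtain hι | hι := (Nat.succ_le_of_lt (Nat.card_pos (α := ι))).eq_or_lt
  · have heven := even_card_of_charTwo (F := F)
    have := (Nat.card_eq_one_iff_unique.mp hι.symm).1
    have := uniqueOfSubsingleton (Classical.arbitrary ι)
    obtain ⟨x₁, y₁, x₂, y₂, h⟩ := exists_isBeauvilleStructure_sl_two (F := F) (by grind)
    exact ⟨_, _, _, _, h.map (MulEquiv.funUnique ι SL(2, F)).symm⟩
  · obtain ⟨a, b, hab⟩ := h2gen
    exact exists_isBeauvilleStructure_pi_sl_two hF hι
      ⟨f a, f b, closure_pair_map_eq_top (f := f.toMonoidHom) f.surjective hab⟩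

end Existence

end Beauville

theorem psl_two_char_two_power_purely_strongly_real_general {F ι : Type*} [Field F] [Finite F]
    [CharP F 2] [Finite ι] [Nonempty ι] (hF : 2 < Nat.card F)
    (hcard : (Nat.card F, Nat.card ι) ≠ (4, 1))
    (h2gen : ∃ a b : ι → PSL(2, F), Subgroup.closure {a, b} = ⊤) :
    (∃ x₁ y₁ x₂ y₂ : ι → PSL(2, F), IsBeauvilleStructure x₁ y₁ x₂ y₂) ∧
    ∀ x₁ y₁ x₂ y₂ : ι → PSL(2, F),
      IsBeauvilleStructure x₁ y₁ x₂ y₂ → IsStronglyRealStructure x₁ y₁ x₂ y₂ :=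
  ⟨Beauville.exists_isBeauvilleStructure_pi_psl_two hF hcard h2gen,
    fun _ _ _ _ => Beauville.isStronglyRealStructure_pi_psl_two⟩

/-- for `q = 2^e > 2` a power of `2` and `k ≥ 1` with `(q,k) ≠ (4,1)`,
if the characteristically simple group `L₂(q)^k = PSL(2,F_q)^k` is `2`-generated then it
is a purely strongly real Beauville group: it is a Beauville group and every Beauville
structure of it is strongly real. -/
theorem psl_two_char_two_power_purely_strongly_real
    (e k : ℕ) (he : 2 ≤ e) (hk : 1 ≤ k) (hqk : ((2 : ℕ) ^ e, k) ≠ (4, 1))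
    (h2gen : ∃ a b : Fin k → PSL(2, GaloisField 2 e), Subgroup.closure {a, b} = ⊤) :
    (∃ x₁ y₁ x₂ y₂ : Fin k → PSL(2, GaloisField 2 e),
        IsBeauvilleStructure x₁ y₁ x₂ y₂) ∧
    ∀ x₁ y₁ x₂ y₂ : Fin k → PSL(2, GaloisField 2 e),
      IsBeauvilleStructure x₁ y₁ x₂ y₂ → IsStronglyRealStructure x₁ y₁ x₂ y₂ := by
  have hcard : Nat.card (GaloisField 2 e) = 2 ^ e := GaloisField.card 2 e (by omega)
  have := Fin.pos_iff_nonempty.mp hk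
  refine psl_two_char_two_power_purely_strongly_real_general ?_ ?_ h2gen
  · exact hcard ▸ lt_self_pow₀ one_lt_two he
  · rwa [hcard, Nat.card_fin]
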